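/- Z is a minimum set satisfying the graphical adjustment criterion for A,Y,L,N in G (it satisfies the criterion and no set of strictly smaller cardinality does) if and only if Z is a minimum A–Y cut in H^1 (an A–Y cut such that no A–Y cut has strictly smaller cardinality). -/

import Mathlib

open Relation Set

namespace CausalGraph

variable {V : Type*} [Fintype V] [DecidableEq V]

/-- `p` is a path in the undirected sense from `u` to `v` along adjacency `Adj`:
a nonempty list of pairwise distinct vertices, consecutive ones adjacent,
starting at `u` and ending at `v`. -/
def IsPath (Adj : V → V → Prop) (u v : V) (p : List V) : Prop :=
  List.Chain' Adj p ∧ p.head? = some u ∧ p.getLast? = some v ∧ p.Nodup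

/-- Ancestors of `S` in the digraph `D` (every vertex is an ancestor of itself). -/
def anc (D : V → V → Prop) (S : Set V) : Set V :=
  {u | ∃ v ∈ S, Relation.ReflTransGen D u v}

/-- Descendants of `S` in the digraph `D` (every vertex is a descendant of itself). -/
def desc (D : V → V → Prop) (S : Set V) : Set V :=
  {u | ∃ v ∈ S, Relation.ReflTransGen D v u}

/-- Parents of vertices of `S` in the digraph `D`. -/
def parents (D : V → V → Prop) (S : Set V) : Set V :=
  {u | ∃ v ∈ S, D u v}

/-- The digraph `D` is acyclic. -/
def Acyclic (D : V → V → Prop) : Prop :=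
  ∀ u v, D u v → ¬ Relation.ReflTransGen D v u

/-- Vertices other than `A` lying on a directed path from `A` to `Y`. -/
def cn (D : V → V → Prop) (A Y : V) : Set V :=
  {v | v ≠ A ∧ Relation.ReflTransGen D A v ∧ Relation.ReflTransGen D v Y}

/-- The forbidden set. -/
def forb (D : V → V → Prop) (A Y : V) : Set V :=
  desc D (cn D A Y) ∪ {A}

/-- Proper back-door graph: delete every edge from `A` into `cn D A Y`. -/
def pbd (D : V → V → Prop) (A Y : V) : V → V → Prop :=
  fun u v => D u v ∧ ¬(u = A ∧ v ∈ cn D A Y)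

/-- `y` is an interior vertex of the list `p` with neighbours `x` and `z` on the path. -/
def InteriorAt (p : List V) (x y z : V) : Prop :=
  ∃ s t : List V, p = s ++ x :: y :: z :: t

/-- The path `p` is blocked by `Z` in the digraph `D`: some interior non-collider
lies in `Z`, or some interior collider has no descendant in `Z`. -/
def Blocked (D : V → V → Prop) (Z : Set V) (p : List V) : Prop :=
  (∃ x y z, InteriorAt p x y z ∧ ¬(D x y ∧ D z y) ∧ y ∈ Z) ∨
  (∃ x y z, InteriorAt p x y z ∧ (D x y ∧ D z y) ∧ ∀ d ∈ desc D {y}, d ∉ Z)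

/-- d-separation of `S` and `T` given `Z` in the digraph `D`. -/
def DSep (D : V → V → Prop) (S T Z : Set V) : Prop :=
  ∀ s ∈ S, ∀ t ∈ T, ∀ p : List V,
    IsPath (fun a b => D a b ∨ D b a) s t p → Blocked D Z p

/-- Moral graph of the subgraph of the digraph `D` induced on `Vs`. -/
def moral (D : V → V → Prop) (Vs : Set V) : SimpleGraph V :=
  SimpleGraph.fromRel (fun u v =>
    u ∈ Vs ∧ v ∈ Vs ∧ (D u v ∨ D v u ∨ ∃ w ∈ Vs, D u w ∧ D v w))

/-- Separation in an undirected graph: every path from `S` to `T` meets `W`. -/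
def USep (H : SimpleGraph V) (S T W : Set V) : Prop :=
  ∀ s ∈ S, ∀ t ∈ T, ∀ p : List V, IsPath H.Adj s t p → ∃ z ∈ W, z ∈ p

/-- `Z` is an `A`–`Y` cut in an undirected graph `H` with vertex set `Vs`. -/
def IsCut (Vs : Set V) (H : SimpleGraph V) (A Y : V) (Z : Set V) : Prop :=
  Z ⊆ Vs ∧ Z ∩ {A, Y} = ∅ ∧ ∀ p : List V, IsPath H.Adj A Y p → ∃ z ∈ Z, z ∈ p

def MinimalCut (Vs : Set V) (H : SimpleGraph V) (A Y : V) (Z : Set V) : Prop :=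
  IsCut Vs H A Y Z ∧ ∀ Z' ⊂ Z, ¬ IsCut Vs H A Y Z'

def MinimumCut (Vs : Set V) (H : SimpleGraph V) (A Y : V) (Z : Set V) : Prop :=
  IsCut Vs H A Y Z ∧ ∀ Z', IsCut Vs H A Y Z' → Z.ncard ≤ Z'.ncard

/-- Connected component of `y` in `H` restricted to the complement of `U`:
vertices reachable from `y` by paths avoiding `U`. -/
def cc (H : SimpleGraph V) (U : Set V) (y : V) : Set V :=
  {w | ∃ p : List V, IsPath H.Adj y w p ∧ ∀ x ∈ p, x ∉ U}

/-- Boundary of `S` in `H`: vertices outside `S` adjacent to some vertex of `S`. -/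
def bdry (H : SimpleGraph V) (S : Set V) : Set V :=
  {v | v ∉ S ∧ ∃ u ∈ S, H.Adj v u}

/-- The partial order `Z₁ ⊴_H Z₂` between `A`–`Y` cuts. -/
def TLE (H : SimpleGraph V) (A Y : V) (Z₁ Z₂ : Set V) : Prop :=
  USep H {Y} (Z₂ \ Z₁) Z₁ ∧ USep H {A} (Z₁ \ Z₂) Z₂

/-- Ancestors of `{A, Y} ∪ L`. -/
def ancAYL (D : V → V → Prop) (A Y : V) (L : Set V) : Set V :=
  anc D ({A, Y} ∪ L)

/-- The moral graph `H⁰` of the proper back-door graph induced on `an_G({A,Y} ∪ L)`. -/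
def H0 (D : V → V → Prop) (A Y : V) (L : Set V) : SimpleGraph V :=
  moral (pbd D A Y) (ancAYL D A Y L)

/-- The set of vertices removed from `H⁰` when constructing `H¹`. -/
def Ignore (D : V → V → Prop) (A Y : V) (L N : Set V) : Set V :=
  (ancAYL D A Y L \ {A, Y}) ∩ ((Set.univ \ N) ∪ forb D A Y)

/-- Vertex set of `H¹`. -/
def H1verts (D : V → V → Prop) (A Y : V) (L N : Set V) : Set V :=
  ancAYL D A Y L \ Ignore D A Y L N

/-- The non-parametric adjustment efficiency graph `H¹`: delete the vertices of
`Ignore`, join two remaining vertices if they are joined in `H⁰` by a path all of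
whose intermediate vertices are in `Ignore`, and join `A` and `Y` to every vertex
of `L`. -/
def H1 (D : V → V → Prop) (A Y : V) (L N : Set V) : SimpleGraph V :=
  SimpleGraph.fromRel (fun u v =>
    u ∈ H1verts D A Y L N ∧ v ∈ H1verts D A Y L N ∧
      ((∃ p : List V, IsPath (H0 D A Y L).Adj u v p ∧
          ∀ x ∈ p, x ≠ u → x ≠ v → x ∈ Ignore D A Y L N) ∨
        (u = A ∧ v ∈ L) ∨ (u = Y ∧ v ∈ L)))

/-- The graphical adjustment criterion for `A, Y, L, N` in the DAG `D`. -/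
def GAC (D : V → V → Prop) (A Y : V) (L N Z : Set V) : Prop :=
  DSep (pbd D A Y) {A} {Y} Z ∧ Z ∩ forb D A Y = ∅ ∧ L ⊆ Z ∧ Z ⊆ N

def MinimalGAC (D : V → V → Prop) (A Y : V) (L N Z : Set V) : Prop :=
  GAC D A Y L N Z ∧ ∀ Z' ⊂ Z, ¬ GAC D A Y L N Z'

def MinimumGAC (D : V → V → Prop) (A Y : V) (L N Z : Set V) : Prop :=
  GAC D A Y L N Z ∧ ∀ Z', GAC D A Y L N Z' → Z.ncard ≤ Z'.ncard

/-- Graphical admissibility of the pair `(L, N)`. -/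
def Admissible (D : V → V → Prop) (A Y : V) (L N : Set V) : Prop :=
  ∃ Z, GAC D A Y L N Z

end CausalGraph

namespace CausalGraph

section aux
variable {V : Type*}

theorem path_of_rtg {R : V → V → Prop} {u v : V} (h : Relation.ReflTransGen R u v) :
    ∃ p, IsPath R u v p := by
  induction h using Relation.ReflTransGen.head_induction_on with
  | refl => exact ⟨[v], List.isChain_singleton _, by simp⟩
  | @head a c hac _ ih =>
    obtain ⟨p, hc, hh, hl, hn⟩ := ih
    by_cases ha : a ∈ p
    · obtain ⟨s, t, rfl⟩ := List.append_of_mem ha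
      refine ⟨a :: t, ?_, by simp, ?_, ?_⟩
      · exact hc.right_of_append
      · rw [List.getLast?_append] at hl
        simpa using hl
      · exact (List.nodup_append.1 hn).2.1
    · cases p with
      | nil => simp at hh
      | cons b t =>
        simp only [List.head?_cons, Option.some.injEq] at hh
        subst hh
        refine ⟨a :: b :: t, ?_, by simp, ?_, ?_⟩
        · exact List.isChain_cons_cons.2 ⟨hac, hc⟩
        · simpa using hl
        · exact List.nodup_cons.2 ⟨ha, hn⟩

theorem rtg_of_path {R : V → V → Prop} {P : V → Prop} {u v : V} {p : List V}
    (h : IsPath R u v p) (hP : ∀ x ∈ p, P x) :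
    Relation.ReflTransGen (fun a b => R a b ∧ P a ∧ P b) u v := by
  obtain ⟨hc, hh, hl, -⟩ := h
  induction p generalizing u with
  | nil => simp at hh
  | cons a t ih =>
    simp only [List.head?_cons, Option.some.injEq] at hh
    subst hh
    cases t with
    | nil =>
      simp only [List.getLast?_singleton, Option.some.injEq] at hl
      subst hl; exact .refl
    | cons b t =>
      have hc' := List.isChain_cons_cons.1 hc
      refine .head ⟨hc'.1, hP a (by simp), hP b (by simp)⟩
        (ih (fun x hx => hP x (List.mem_cons_of_mem _ hx)) hc'.2 (by simp) (by simpa using hl))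

theorem path_avoid {R : V → V → Prop} {P : V → Prop} {u v : V} (hu : P u)
    (h : Relation.ReflTransGen (fun a b => R a b ∧ P a ∧ P b) u v) :
    ∃ p, IsPath R u v p ∧ ∀ x ∈ p, P x := by
  obtain ⟨p, hc, hh, hl, hn⟩ := path_of_rtg h
  refine ⟨p, ⟨hc.imp (fun _ _ h => h.1), hh, hl, hn⟩, ?_⟩
  clear hl hn h
  induction p generalizing u with
  | nil => simp
  | cons a t ih =>
    simp only [List.head?_cons, Option.some.injEq] at hh
    subst hh
    cases t with
    | nil => simpa using hu
    | cons b t =>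
      have hc' := List.isChain_cons_cons.1 hc
      intro x hx
      rcases List.mem_cons.1 hx with rfl | hx
      · exact hu
      · exact ih hc'.1.2.2 hc'.2 (by simp) x hx

/-- local openness -/
def OKat (D : V → V → Prop) (Z : Set V) (x y z : V) : Prop :=
  (¬(D x y ∧ D z y) → y ∉ Z) ∧ (D x y ∧ D z y → ∃ d ∈ Z, Relation.ReflTransGen D y d)

/-- open walks -/
def OW (D : V → V → Prop) (Z : Set V) : List V → Prop
  | [] => True
  | [_] => True
  | [x, y] => D x y ∨ D y x
  | x :: y :: z :: t => (D x y ∨ D y x) ∧ OKat D Z x y z ∧ OW D Z (y :: z :: t)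

theorem not_blocked_iff (D : V → V → Prop) (Z : Set V) (p : List V) :
    ¬ Blocked D Z p ↔ ∀ x y z, InteriorAt p x y z → OKat D Z x y z := by
  constructor
  · intro hb x y z hi
    refine ⟨fun h hy => hb (Or.inl ⟨x, y, z, hi, h, hy⟩), fun h => ?_⟩
    by_contra hc
    refine hb (Or.inr ⟨x, y, z, hi, h, ?_⟩)
    rintro d ⟨w, hw, hd⟩ hdZ
    rw [Set.mem_singleton_iff] at hw
    subst hw
    exact hc ⟨d, hdZ, hd⟩
  · rintro h (⟨x, y, z, hi, h1, h2⟩ | ⟨x, y, z, hi, h1, h2⟩)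
    · exact (h x y z hi).1 h1 h2
    · obtain ⟨d, hd, hd'⟩ := (h x y z hi).2 h1
      exact h2 d ⟨y, rfl, hd'⟩ hd

theorem OW_iff (D : V → V → Prop) (Z : Set V) (p : List V) :
    OW D Z p ↔ List.IsChain (fun a b => D a b ∨ D b a) p ∧ ¬ Blocked D Z p := by
  rw [not_blocked_iff]
  induction p with
  | nil => simp [OW, InteriorAt]
  | cons x t ih =>
    have short : ∀ q : List V, q.length ≤ 2 → ∀ x y z, ¬ InteriorAt q x y z := by
      rintro q hq x y z ⟨s, t, rfl⟩
      simp at hq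
      omega
    rcases t with _ | ⟨y, _ | ⟨z, t⟩⟩
    · simp only [OW, List.isChain_singleton, true_and, true_iff]
      intro a b c h
      exact absurd h (short _ (by simp) _ _ _)
    · simp only [OW, List.isChain_cons_cons, List.isChain_singleton, and_true]
      refine ⟨fun h => ⟨h, fun a b c h => absurd h (short _ (by simp) _ _ _)⟩, fun h => h.1⟩
    · simp only [OW]
      rw [ih, List.isChain_cons_cons (a := x)]
      constructor
      · rintro ⟨ha, hok, hc, hi⟩
        refine ⟨⟨ha, hc⟩, ?_⟩
        rintro a b c ⟨s, u, hs⟩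
        cases s with
        | nil =>
          simp only [List.nil_append, List.cons.injEq] at hs
          obtain ⟨rfl, rfl, rfl, -⟩ := hs
          exact hok
        | cons e s =>
          simp only [List.cons_append, List.cons.injEq] at hs
          exact hi a b c ⟨s, u, hs.2⟩
      · rintro ⟨⟨ha, hc⟩, hi⟩
        refine ⟨ha, hi _ _ _ ⟨[], t, rfl⟩, hc, ?_⟩
        rintro a b c ⟨s, u, hs⟩
        exact hi a b c ⟨x :: s, u, by rw [hs]; rfl⟩

theorem OW_cons {D : V → V → Prop} {Z : Set V} {x y : V} {t : List V} :
    OW D Z (x :: y :: t) ↔ (D x y ∨ D y x) ∧ (∀ z ∈ t.head?, OKat D Z x y z) ∧ OW D Z (y :: t) := by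
  cases t with
  | nil => simp [OW]
  | cons z t => simp [OW]

theorem OW_join {D : V → V → Prop} {Z : Set V} {v : V} {s t : List V} :
    OW D Z (s ++ v :: t) ↔ OW D Z (s ++ [v]) ∧ OW D Z (v :: t) ∧
      ∀ x ∈ s.getLast?, ∀ z ∈ t.head?, OKat D Z x v z := by
  induction s with
  | nil => simp [OW]
  | cons a s ih =>
    cases s with
    | nil =>
      simp only [List.cons_append, List.nil_append, OW_cons]
      simp [OW]
      tauto
    | cons b s =>
      simp only [List.cons_append, OW_cons] at ih ⊢
      rw [ih]
      have : (s ++ v :: t).head? = (s ++ [v]).head? := by cases s <;> simp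
      rw [this]
      simp only [List.getLast?_cons_cons]
      tauto

theorem OKat_symm {D : V → V → Prop} {Z : Set V} {x y z : V} (h : OKat D Z x y z) :
    OKat D Z z y x := by
  unfold OKat at *
  tauto

theorem OW_reverse {D : V → V → Prop} {Z : Set V} {p : List V} (h : OW D Z p) :
    OW D Z p.reverse := by
  induction p with
  | nil => simpa using h
  | cons x t ih =>
    cases t with
    | nil => simp [OW]
    | cons y t =>
      rw [OW_cons] at h
      have h2 := ih h.2.2
      rw [List.reverse_cons, List.reverse_cons, List.append_assoc]
      rw [List.reverse_cons] at h2
      simp only [List.cons_append, List.nil_append]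
      rw [OW_join]
      refine ⟨h2, ?_, ?_⟩
      · simp only [OW]; tauto
      · intro a ha b hb
        simp at hb
        subst hb
        rw [List.getLast?_reverse] at ha
        exact OKat_symm (h.2.1 a ha)

/-- following a walk forward -/
theorem OW_fwd {D : V → V → Prop} {Z : Set V} {v a : V} {l : List V}
    (h : OW D Z (v :: a :: l)) (hva : D v a) {y : V} (hy : (v :: a :: l).getLast? = some y) :
    (∃ d ∈ Z, Relation.ReflTransGen D v d) ∨
    (Relation.ReflTransGen D v y ∧ ∀ s x z, v :: a :: l = s ++ [x, z] → D x z) := by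
  induction l generalizing v a with
  | nil =>
    right
    simp at hy
    subst hy
    refine ⟨.single hva, ?_⟩
    intro s x z hs
    rcases s with _ | ⟨_, _ | ⟨_, s⟩⟩
    · simp at hs; obtain ⟨rfl, rfl⟩ := hs; exact hva
    · simp at hs
    · simp at hs
  | cons b l ih =>
    rw [OW_cons] at h
    obtain ⟨-, h2, h3⟩ := h
    have hok := h2 b (by simp)
    by_cases hba : D b a
    · obtain ⟨d, hd, hd'⟩ := hok.2 ⟨hva, hba⟩
      exact Or.inl ⟨d, hd, .head hva hd'⟩
    · have hab : D a b := (OW_cons.1 h3).1.resolve_right hba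
      rcases ih h3 hab (by simpa using hy) with ⟨d, hd, hd'⟩ | ⟨h4, h5⟩
      · exact Or.inl ⟨d, hd, .head hva hd'⟩
      · refine Or.inr ⟨.head hva h4, ?_⟩
        intro s x z hs
        cases s with
        | nil => simp at hs
        | cons e s =>
          simp only [List.cons_append, List.cons.injEq] at hs
          exact h5 s x z hs.2

theorem OW_anc {D : V → V → Prop} {Z : Set V} {u v : V} {p : List V}
    (h : OW D Z p) (hu : p.head? = some u) (hv : p.getLast? = some v) {x : V} (hx : x ∈ p) :
    Relation.ReflTransGen D x u ∨ Relation.ReflTransGen D x v ∨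
      ∃ d ∈ Z, Relation.ReflTransGen D x d := by
  have key : ∀ (q : List V) (w : V), OW D Z q → q.getLast? = some w → ∀ s z t, q = s ++ x :: z :: t →
      D x z → Relation.ReflTransGen D x w ∨ ∃ d ∈ Z, Relation.ReflTransGen D x d := by
    rintro q w hq hw s z t rfl hxz
    rw [OW_join] at hq
    rw [List.getLast?_append] at hw
    rcases OW_fwd hq.2.1 hxz (y := w) (by simpa using hw) with h | h
    · exact Or.inr h
    · exact Or.inl h.1
  obtain ⟨s, t, rfl⟩ := List.append_of_mem hx
  rcases s.eq_nil_or_concat with rfl | ⟨s, a, rfl⟩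
  · simp at hu; subst hu; exact Or.inl .refl
  rcases t with _ | ⟨b, t⟩
  · rw [List.getLast?_append] at hv
    simp at hv; subst hv; exact Or.inr (Or.inl .refl)
  by_cases hb : D x b
  · have := key _ v h hv _ b t rfl hb
    tauto
  by_cases ha : D x a
  · have := key _ u (OW_reverse h) (by rw [List.getLast?_reverse]; exact hu)
      (b :: t).reverse a s.reverse (by simp) ha
    tauto
  have hj := OW_join.1 h
  have h1 : D b x := ((OW_cons.1 hj.2.1).1).resolve_left hb
  have h2 : D a x := by
    have := hj.1
    rw [List.concat_eq_append, List.append_assoc] at this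
    have := (OW_join.1 this).2.1
    exact (OW_cons.1 this).1.resolve_right ha
  right; right
  exact (hj.2.2 a (by simp) b (by simp)).2 ⟨h2, h1⟩

theorem not_nodup_split {p : List V} (h : ¬ p.Nodup) : ∃ s v m t, p = s ++ v :: (m ++ v :: t) := by
  induction p with
  | nil => simp at h
  | cons a l ih =>
    by_cases ha : a ∈ l
    · obtain ⟨m, t, rfl⟩ := List.append_of_mem ha
      exact ⟨[], a, m, t, rfl⟩
    · have : ¬ l.Nodup := fun hl => h (List.nodup_cons.2 ⟨ha, hl⟩)
      obtain ⟨s, v, m, t, rfl⟩ := ih this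
      exact ⟨a :: s, v, m, t, rfl⟩

theorem OW_cut {D : V → V → Prop} {Z : Set V} (hac : Acyclic D) {s m t : List V} {v : V}
    (h : OW D Z (s ++ v :: (m ++ v :: t))) : OW D Z (s ++ v :: t) := by
  rw [OW_join] at h ⊢
  obtain ⟨h1, h2, h3⟩ := h
  have h2' : OW D Z ((v :: m) ++ v :: t) := h2
  rw [OW_join] at h2'
  obtain ⟨h4, h5, h6⟩ := h2'
  refine ⟨h1, h5, ?_⟩
  intro x hx z hz
  have hirr : ¬ D v v := fun hh => hac _ _ hh .refl
  cases m with
  | nil =>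
    have := (OW_cons.1 h4).1
    tauto
  | cons a m =>
    have hL : OKat D Z x v a := h3 x hx a (by simp)
    obtain ⟨b, hb⟩ : ∃ b, (v :: a :: m).getLast? = some b := by
      rw [List.getLast?_cons]; exact ⟨_, rfl⟩
    have hR : OKat D Z b v z := h6 b hb z hz
    unfold OKat at hL hR ⊢
    refine ⟨fun hn => by tauto, fun hc => ?_⟩
    by_cases hav : D a v
    · exact hL.2 ⟨hc.1, hav⟩
    · have hva : D v a := (OW_cons.1 h4).1.resolve_right hav
      rcases OW_fwd (l := m ++ [v]) h4 hva (y := v) (by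
          rw [← List.cons_append, ← List.cons_append, List.getLast?_append]; simp) with h | ⟨-, h⟩
      · exact h
      · obtain ⟨s', hs'⟩ : ∃ s', v :: a :: m = s' ++ [b] := by
          have := List.getLast?_eq_some_iff.1 hb
          exact this
        have := h s' b v (by
          rw [← List.cons_append, ← List.cons_append, hs']; simp)
        exact hR.2 ⟨this, hc.2⟩

theorem OW_path {D : V → V → Prop} {Z : Set V} (hac : Acyclic D) {u w : V} (n : ℕ) : ∀ {p : List V},
    p.length = n → OW D Z p → p.head? = some u → p.getLast? = some w →
    ∃ q, IsPath (fun a b => D a b ∨ D b a) u w q ∧ ¬ Blocked D Z q := by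
  induction n using Nat.strong_induction_on with
  | _ n ih =>
  intro p hn h hu hw
  by_cases hnd : p.Nodup
  · have := (OW_iff D Z p).1 h
    exact ⟨p, ⟨this.1, hu, hw, hnd⟩, this.2⟩
  · obtain ⟨s, v, m, t, rfl⟩ := not_nodup_split hnd
    refine ih (s ++ v :: t).length ?_ rfl (OW_cut hac h) ?_ ?_
    · rw [← hn]; simp
    · cases s <;> simpa using hu
    · rw [List.getLast?_append] at hw ⊢
      rw [← List.cons_append, List.getLast?_append] at hw
      simpa using hw

/-- Open walk from `v` to `Y`. -/
def RW (D : V → V → Prop) (Z : Set V) (Y v : V) : Prop :=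
  ∃ t, OW D Z (v :: t) ∧ (v :: t).getLast? = some Y

theorem RW_up {D : V → V → Prop} {Z : Set V} (hac : Acyclic D) {Y v a : V} (h : RW D Z Y v)
    (hv : v ∉ Z) (hva : D v a) : RW D Z Y a := by
  obtain ⟨t, h1, h2⟩ := h
  refine ⟨v :: t, OW_cons.2 ⟨Or.inr hva, ?_, h1⟩, by simpa using h2⟩
  intro z hz
  have : ¬ D a v := fun h => hac _ _ hva (.single h)
  unfold OKat; tauto

theorem RW_ups {D : V → V → Prop} {Z : Set V} (hac : Acyclic D) {Y v a : V} (h : RW D Z Y v)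
    (hv : ∀ d ∈ Z, ¬ Relation.ReflTransGen D v d) (hva : Relation.ReflTransGen D v a) :
    RW D Z Y a := by
  induction hva with
  | refl => exact h
  | @tail b c hb hbc ih => exact RW_up hac ih (fun hz => hv _ hz hb) hbc

theorem RW_down {D : V → V → Prop} {Z : Set V} (hac : Acyclic D) {Y v : V}
    (hv : ∀ d ∈ Z, ¬ Relation.ReflTransGen D v d) (h : Relation.ReflTransGen D v Y) :
    ∃ t, OW D Z (v :: t) ∧ (v :: t).getLast? = some Y ∧ ∀ z ∈ t.head?, D v z := by
  induction h using Relation.ReflTransGen.head_induction_on with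
  | refl => exact ⟨[], by simp [OW]⟩
  | @head a c hac' _ ih =>
    obtain ⟨t, h1, h2, h3⟩ := ih (fun d hd h => hv d hd (.head hac' h))
    refine ⟨c :: t, OW_cons.2 ⟨Or.inl hac', ?_, h1⟩, by simpa using h2, by simpa using hac'⟩
    intro z hz
    have h4 : ¬ D z c := fun h => hac _ _ (h3 z hz) (.single h)
    have h5 : c ∉ Z := fun h => hv c h (.single hac')
    unfold OKat; tauto

theorem RW_step {D : V → V → Prop} {Z : Set V} (hac : Acyclic D) {A Y v v' : V} (h : RW D Z Y v')
    (hv' : v' ∉ Z) (hadj : D v v' ∨ D v' v)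
    (han : Relation.ReflTransGen D v' A ∨ Relation.ReflTransGen D v' Y ∨
      ∃ d ∈ Z, Relation.ReflTransGen D v' d) : RW D Z Y v ∨ RW D Z Y A := by
  by_cases hz : ∃ d ∈ Z, Relation.ReflTransGen D v' d
  · left
    obtain ⟨t, h1, h2⟩ := h
    refine ⟨v' :: t, OW_cons.2 ⟨hadj, ?_, h1⟩, by simpa using h2⟩
    intro z _
    unfold OKat; tauto
  · have hz' : ∀ d ∈ Z, ¬ Relation.ReflTransGen D v' d := fun d hd h => hz ⟨d, hd, h⟩
    rcases han with h3 | h3 | h3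
    · exact Or.inr (RW_ups hac h hz' h3)
    · left
      obtain ⟨t, h1, h2, h4⟩ := RW_down hac hz' h3
      refine ⟨v' :: t, OW_cons.2 ⟨hadj, ?_, h1⟩, by simpa using h2⟩
      intro z hzz
      have h4 : ¬ D z v' := fun h => hac _ _ (h4 z hzz) (.single h)
      unfold OKat; tauto
    · exact absurd h3 hz

theorem dsep_iff {D : V → V → Prop} {Z An : Set V} (hac : Acyclic D) {A Y : V}
    (hAZ : A ∉ Z) (hYZ : Y ∉ Z)
    (hAn : ∀ v, v ∈ An ↔ (Relation.ReflTransGen D v A ∨ Relation.ReflTransGen D v Y ∨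
      ∃ d ∈ Z, Relation.ReflTransGen D v d)) :
    DSep D {A} {Y} Z ↔ ¬ Relation.ReflTransGen
      (fun a b => (moral D An).Adj a b ∧ a ∉ Z ∧ b ∉ Z) A Y := by
  constructor
  · intro hsep hr
    have : RW D Z Y A := by
      suffices H : ∀ v, Relation.ReflTransGen
          (fun a b => (moral D An).Adj a b ∧ a ∉ Z ∧ b ∉ Z) v Y → RW D Z Y v ∨ RW D Z Y A by
        simpa using H A hr
      intro v hv
      induction hv using Relation.ReflTransGen.head_induction_on with
      | refl => exact Or.inl ⟨[], by simp [OW]⟩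
      | @head v v' hvv _ ih =>
        rcases ih with ih | ih
        swap
        · exact Or.inr ih
        obtain ⟨hadj, hvZ, hvZ'⟩ := hvv
        have : v' ∈ An ∧ (D v v' ∨ D v' v ∨ ∃ w ∈ An, D v w ∧ D v' w) := by
          simp only [moral, SimpleGraph.fromRel_adj] at hadj
          rcases hadj.2 with ⟨h1, h2, h3⟩ | ⟨h1, h2, h3⟩
          · exact ⟨h2, h3⟩
          · refine ⟨h1, ?_⟩
            rcases h3 with h3 | h3 | ⟨w, hw, h3, h4⟩
            · tauto
            · tauto
            · exact Or.inr (Or.inr ⟨w, hw, h4, h3⟩)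
        obtain ⟨hA', h⟩ := this
        have hst : ∀ w, w ∈ An → w ∉ Z → RW D Z Y w → (D v w ∨ D w v) →
          RW D Z Y v ∨ RW D Z Y A := fun w hw hwZ hR hh => RW_step hac hR hwZ hh ((hAn w).1 hw)
        rcases h with h | h | ⟨w, hw, h1, h2⟩
        · exact hst v' hA' hvZ' ih (Or.inl h)
        · exact hst v' hA' hvZ' ih (Or.inr h)
        · by_cases hwZ : w ∈ Z
          · left
            obtain ⟨t, h3, h4⟩ := ih
            refine ⟨w :: v' :: t, OW_cons.2 ⟨Or.inl h1, ?_, OW_cons.2 ⟨Or.inr h2, ?_, h3⟩⟩,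
              by simpa using h4⟩
            · intro z hz
              simp at hz
              subst hz
              exact ⟨fun h => absurd ⟨h1, h2⟩ h, fun _ => ⟨w, hwZ, .refl⟩⟩
            · intro z hz
              have : ¬ D w v' := fun h => hac _ _ h2 (.single h)
              unfold OKat; tauto
          · exact hst w hw hwZ (RW_up hac ih hvZ' h2) (Or.inl h1)
    obtain ⟨t, h1, h2⟩ := this
    obtain ⟨q, hq, hb⟩ := OW_path (u := A) hac _ rfl h1 (by simp) h2
    exact hb (hsep A rfl Y rfl q hq)
  · intro hr s hs t ht p hp
    rw [Set.mem_singleton_iff] at hs ht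
    subst hs ht
    by_contra hb
    have how := (OW_iff D Z p).2 ⟨hp.1, hb⟩
    obtain ⟨-, hh, hl, hnd⟩ := hp
    have hmem : ∀ x ∈ p, x ∈ An := fun x hx => (hAn x).2 (OW_anc how hh hl hx)
    apply hr
    clear hr hb hAn
    revert how hh hl hmem hnd hAZ
    generalize hn : p.length = n
    induction n using Nat.strong_induction_on generalizing p s with
    | _ n ih =>
    intro hAZ how hh hl hnd hmem
    rcases p with _ | ⟨x, _ | ⟨y, p⟩⟩
    · simp at hh
    · simp at hh hl
      subst hh hl
      exact .refl
    simp only [List.head?_cons, Option.some.injEq] at hh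
    subst hh
    have hc := OW_cons.1 how
    by_cases hy : y ∈ Z
    · cases p with
      | nil =>
        simp at hl
        subst hl
        exact absurd hy hYZ
      | cons z p =>
        have hok := hc.2.1 z (by simp)
        have hcol : D x y ∧ D z y := by
          by_contra h; exact hok.1 h hy
        have hzZ : z ∉ Z := by
          cases p with
          | nil =>
            simp at hl
            subst hl
            exact hYZ
          | cons w p =>
            have := (OW_cons.1 hc.2.2).2.1 w (by simp)
            exact this.1 (fun h => hac _ _ h.1 (.single hcol.2))
        have hrec := ih (z :: p).length (by rw [← hn]; simp) z (z :: p) rfl hzZ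
          (OW_cons.1 hc.2.2).2.2 (by simp) (by simpa using hl) (by
            exact (List.nodup_cons.1 (List.nodup_cons.1 hnd).2).2)
            (fun a ha => hmem a (by simp at ha ⊢; tauto))
        refine .head ⟨?_, hAZ, hzZ⟩ hrec
        simp only [moral, SimpleGraph.fromRel_adj]
        refine ⟨?_, Or.inl ⟨hmem _ (by simp), hmem _ (by simp), Or.inr (Or.inr
          ⟨y, hmem _ (by simp), hcol⟩)⟩⟩
        rintro rfl
        simp at hnd
    · have hrec := ih (y :: p).length (by rw [← hn]; simp) y (y :: p) rfl hy
          hc.2.2 (by simp) (by simpa using hl) (by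
            exact (List.nodup_cons.1 hnd).2) (fun a ha => hmem a (by simp at ha ⊢; tauto))
      refine .head ⟨?_, hAZ, hy⟩ hrec
      simp only [moral, SimpleGraph.fromRel_adj]
      refine ⟨?_, Or.inl ⟨hmem _ (by simp), hmem _ (by simp), ?_⟩⟩
      · rintro rfl
        simp at hnd
      · have := hc.1
        tauto

theorem pbd_le {D : V → V → Prop} {A Y u v : V} (h : Relation.ReflTransGen (pbd D A Y) u v) :
    Relation.ReflTransGen D u v := by
  induction h with
  | refl => exact .refl
  | tail _ hb ih => exact ih.tail hb.1

theorem pbd_acyclic {D : V → V → Prop} (hac : Acyclic D) (A Y : V) : Acyclic (pbd D A Y) :=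
  fun u v h h' => hac u v h.1 (pbd_le h')

theorem pbd_anc {D : V → V → Prop} {A Y u v : V} (h : Relation.ReflTransGen D u v) :
    Relation.ReflTransGen (pbd D A Y) u A ∨ Relation.ReflTransGen (pbd D A Y) u v := by
  induction h using Relation.ReflTransGen.head_induction_on with
  | refl => exact Or.inr .refl
  | @head a c hac _ ih =>
    by_cases ha : a = A
    · subst ha; exact Or.inl .refl
    · have : pbd D A Y a c := ⟨hac, fun h => ha h.1⟩
      exact ih.imp (.head this) (.head this)

theorem mem_ancAYL {D : V → V → Prop} {A Y : V} {L Z : Set V} (hLZ : L ⊆ Z)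
    (hZ : Z ⊆ ancAYL D A Y L) (v : V) :
    v ∈ ancAYL D A Y L ↔ (Relation.ReflTransGen (pbd D A Y) v A ∨
      Relation.ReflTransGen (pbd D A Y) v Y ∨
      ∃ d ∈ Z, Relation.ReflTransGen (pbd D A Y) v d) := by
  constructor
  · rintro ⟨w, hw, h⟩
    rcases pbd_anc (A := A) (Y := Y) h with h | h
    · exact Or.inl h
    · rcases hw with (rfl | rfl) | hw
      · exact Or.inl h
      · exact Or.inr (Or.inl h)
      · exact Or.inr (Or.inr ⟨w, hLZ hw, h⟩)
  · rintro (h | h | ⟨d, hd, h⟩)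
    · exact ⟨A, by simp, pbd_le h⟩
    · exact ⟨Y, by simp, pbd_le h⟩
    · obtain ⟨w, hw, hw'⟩ := hZ hd
      exact ⟨w, hw, (pbd_le h).trans hw'⟩

theorem cut_iff {D : V → V → Prop} {A Y : V} {L N Z : Set V} (hAL : A ∉ L) (hYL : Y ∉ L)
    (hLv : L ⊆ H1verts D A Y L N) (hZ : Z ⊆ H1verts D A Y L N) (hAZ : A ∉ Z) (hYZ : Y ∉ Z) :
    (∀ p : List V, IsPath (H1 D A Y L N).Adj A Y p → ∃ z ∈ Z, z ∈ p) ↔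
    (L ⊆ Z ∧ ¬ Relation.ReflTransGen
      (fun a b => (H0 D A Y L).Adj a b ∧ a ∉ Z ∧ b ∉ Z) A Y) := by
  have hAv : A ∈ H1verts D A Y L N := ⟨⟨A, by simp, .refl⟩, fun h => h.1.2 (by simp)⟩
  have hYv : Y ∈ H1verts D A Y L N := ⟨⟨Y, by simp, .refl⟩, fun h => h.1.2 (by simp)⟩
  have e : (∀ p : List V, IsPath (H1 D A Y L N).Adj A Y p → ∃ z ∈ Z, z ∈ p) ↔
      ¬ Relation.ReflTransGen (fun a b => (H1 D A Y L N).Adj a b ∧ a ∉ Z ∧ b ∉ Z) A Y := by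
    constructor
    · intro h hr
      obtain ⟨p, hp, hp'⟩ := path_avoid (P := fun x => x ∉ Z) hAZ hr
      obtain ⟨z, hz, hz'⟩ := h p hp
      exact hp' z hz' hz
    · intro h p hp
      by_contra hcon
      push Not at hcon
      exact h (rtg_of_path hp (fun x hx hz => hcon x hz hx))
  rw [e]
  constructor
  · intro h
    refine ⟨?_, ?_⟩
    · intro l hl
      by_contra hlZ
      apply h
      have hlA : A ≠ l := by rintro rfl; exact hAL hl
      have hlY : l ≠ Y := by rintro rfl; exact hYL hl
      refine .head (b := l) ⟨?_, hAZ, hlZ⟩ (.single ⟨?_, hlZ, hYZ⟩)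
      · simp only [H1, SimpleGraph.fromRel_adj]
        exact ⟨hlA, Or.inl ⟨hAv, hLv hl, by simp [hl]⟩⟩
      · simp only [H1, SimpleGraph.fromRel_adj]
        exact ⟨hlY, Or.inr ⟨hYv, hLv hl, by simp [hl]⟩⟩
    · intro hr
      apply h
      have key : ∀ v, Relation.ReflTransGen
          (fun a b => (H0 D A Y L).Adj a b ∧ a ∉ Z ∧ b ∉ Z) A v →
          ∃ u ∈ H1verts D A Y L N, u ∉ Z ∧ Relation.ReflTransGen
            (fun a b => (H1 D A Y L N).Adj a b ∧ a ∉ Z ∧ b ∉ Z) A u ∧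
            Relation.ReflTransGen (fun a b => (H0 D A Y L).Adj a b ∧ b ∈ Ignore D A Y L N) u v := by
        intro v hv
        induction hv with
        | refl => exact ⟨A, hAv, hAZ, .refl, .refl⟩
        | @tail v v' _ hvv ih =>
          obtain ⟨u, hu, huZ, h1, h2⟩ := ih
          by_cases hI : v' ∈ Ignore D A Y L N
          · exact ⟨u, hu, huZ, h1, h2.tail ⟨hvv.1, hI⟩⟩
          · have hv'v : v' ∈ H1verts D A Y L N := by
              refine ⟨?_, hI⟩
              have := hvv.1
              simp only [H0, moral, SimpleGraph.fromRel_adj] at this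
              tauto
            refine ⟨v', hv'v, hvv.2.2, ?_, .refl⟩
            by_cases huv : u = v'
            · exact huv ▸ h1
            refine h1.tail ⟨?_, huZ, hvv.2.2⟩
            simp only [H1, SimpleGraph.fromRel_adj]
            refine ⟨huv, Or.inl ⟨hu, hv'v, Or.inl ?_⟩⟩
            have h3 : Relation.ReflTransGen (fun a b => (H0 D A Y L).Adj a b ∧
                (a = u ∨ a = v' ∨ a ∈ Ignore D A Y L N) ∧
                (b = u ∨ b = v' ∨ b ∈ Ignore D A Y L N)) u v ∧
                (v = u ∨ v = v' ∨ v ∈ Ignore D A Y L N) := by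
              clear hvv
              rename_i hq
              clear hq
              induction h2 with
              | refl => exact ⟨.refl, Or.inl rfl⟩
              | tail _ hb ih => exact ⟨ih.1.tail ⟨hb.1, ih.2, Or.inr (Or.inr hb.2)⟩,
                  Or.inr (Or.inr hb.2)⟩
            obtain ⟨p, hp, hp'⟩ := path_avoid
              (P := fun a => (a = u ∨ a = v' ∨ a ∈ Ignore D A Y L N)) (Or.inl rfl)
              (h3.1.tail ⟨hvv.1, h3.2, Or.inr (Or.inl rfl)⟩)
            exact ⟨p, hp, fun x hx h1 h2 => by have := hp' x hx; tauto⟩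
      obtain ⟨u, -, -, h1, h2⟩ := key Y hr
      rcases Relation.ReflTransGen.cases_tail h2 with h3 | ⟨c, -, h3⟩
      · exact h3 ▸ h1
      · exact absurd h3.2 hYv.2
  · rintro ⟨hLZ, h⟩ hr
    apply h
    have sub : ∀ u v, u ∉ Z → v ∉ Z → ((∃ p : List V, IsPath (H0 D A Y L).Adj u v p ∧
          ∀ x ∈ p, x ≠ u → x ≠ v → x ∈ Ignore D A Y L N) ∨
        (u = A ∧ v ∈ L) ∨ (u = Y ∧ v ∈ L)) → Relation.ReflTransGen
          (fun a b => (H0 D A Y L).Adj a b ∧ a ∉ Z ∧ b ∉ Z) u v := by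
      rintro u v hu hv (⟨p, hp, hp'⟩ | ⟨-, h⟩ | ⟨-, h⟩)
      · apply rtg_of_path (P := fun x => x ∉ Z) hp
        intro x hx hxZ
        refine (hZ hxZ).2 (hp' x hx ?_ ?_)
        · rintro rfl; exact hu hxZ
        · rintro rfl; exact hv hxZ
      · exact absurd (hLZ h) hv
      · exact absurd (hLZ h) hv
    have symm : ∀ u v, Relation.ReflTransGen
          (fun a b => (H0 D A Y L).Adj a b ∧ a ∉ Z ∧ b ∉ Z) u v → Relation.ReflTransGen
          (fun a b => (H0 D A Y L).Adj a b ∧ a ∉ Z ∧ b ∉ Z) v u := by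
      intro u v h
      induction h with
      | refl => exact .refl
      | tail _ hb ih => exact .head ⟨hb.1.symm, hb.2.2, hb.2.1⟩ ih
    clear h
    suffices H : ∀ w, Relation.ReflTransGen
        (fun a b => (H1 D A Y L N).Adj a b ∧ a ∉ Z ∧ b ∉ Z) A w → Relation.ReflTransGen
          (fun a b => (H0 D A Y L).Adj a b ∧ a ∉ Z ∧ b ∉ Z) A w from H Y hr
    intro w hw
    clear hr
    induction hw with
    | refl => exact .refl
    | @tail u v _ huv ih =>
      refine ih.trans ?_
      obtain ⟨h1, hu, hv⟩ := huv
      simp only [H1, SimpleGraph.fromRel_adj] at h1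
      rcases h1.2 with ⟨-, -, h2⟩ | ⟨-, -, h2⟩
      · exact sub _ _ hu hv h2
      · exact symm _ _ (sub _ _ hv hu h2)

theorem gac_iff_cut {D : V → V → Prop} (hacy : Acyclic D)
    {A Y : V} {L N : Set V}
    (hAY : A ≠ Y) (hAancY : Relation.ReflTransGen D A Y)
    (hLnd : L ∩ desc D {A} = ∅) (hLY : Y ∉ L)
    (hN : {A, Y} ∪ L ⊆ N)
    (Z : Set V) :
    (GAC D A Y L N Z ∧ Z ⊆ ancAYL D A Y L) ↔ IsCut (H1verts D A Y L N) (H1 D A Y L N) A Y Z := by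
  have hAf : A ∈ forb D A Y := Or.inr rfl
  have hYf : Y ∈ forb D A Y := Or.inl ⟨Y, ⟨hAY.symm, hAancY, .refl⟩, .refl⟩
  have hnd : ∀ l ∈ L, ¬ Relation.ReflTransGen D A l := by
    intro l hl h
    have : l ∈ L ∩ desc D {A} := ⟨hl, A, rfl, h⟩
    rw [hLnd] at this
    exact this
  have hAL : A ∉ L := fun h => hnd A h .refl
  have hLf : ∀ l ∈ L, l ∉ forb D A Y := by
    rintro l hl (⟨c, hc, h⟩ | h)
    · exact hnd l hl (hc.2.1.trans h)
    · rw [Set.mem_singleton_iff] at h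
      subst h
      exact hAL hl
  have hLv : L ⊆ H1verts D A Y L N := by
    intro l hl
    refine ⟨⟨l, Or.inr hl, .refl⟩, ?_⟩
    rintro ⟨-, h | h⟩
    · exact h.2 (hN (Or.inr hl))
    · exact hLf l hl h
  constructor
  · rintro ⟨⟨h1, h2, h3, h4⟩, h5⟩
    have hf : ∀ z ∈ Z, z ∉ forb D A Y := by
      intro z hz hf
      have : z ∈ Z ∩ forb D A Y := ⟨hz, hf⟩
      rw [h2] at this; exact this
    have hAZ : A ∉ Z := fun h => hf A h hAf
    have hYZ : Y ∉ Z := fun h => hf Y h hYf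
    have hZv : Z ⊆ H1verts D A Y L N := by
      intro z hz
      refine ⟨h5 hz, ?_⟩
      rintro ⟨-, h | h⟩
      · exact h.2 (h4 hz)
      · exact hf z hz h
    refine ⟨hZv, ?_, ?_⟩
    · ext z
      simp only [Set.mem_inter_iff, Set.mem_insert_iff, Set.mem_singleton_iff,
        Set.mem_empty_iff_false, iff_false]
      rintro ⟨hz, rfl | rfl⟩
      · exact hAZ hz
      · exact hYZ hz
    · rw [cut_iff hAL hLY hLv hZv hAZ hYZ]
      exact ⟨h3, (dsep_iff (pbd_acyclic hacy A Y) hAZ hYZ (mem_ancAYL h3 h5)).1 h1⟩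
  · rintro ⟨hZv, h2, h3⟩
    have hx : ∀ z ∈ Z, z ∉ ({A, Y} : Set V) := by
      intro z hz hf
      have : z ∈ Z ∩ {A, Y} := ⟨hz, hf⟩
      rw [h2] at this; exact this
    have hAZ : A ∉ Z := fun h => hx A h (by simp)
    have hYZ : Y ∉ Z := fun h => hx Y h (by simp)
    rw [cut_iff hAL hLY hLv hZv hAZ hYZ] at h3
    have h5 : Z ⊆ ancAYL D A Y L := fun z hz => (hZv hz).1
    refine ⟨⟨(dsep_iff (pbd_acyclic hacy A Y) hAZ hYZ (mem_ancAYL h3.1 h5)).2 h3.2, ?_, h3.1, ?_⟩, h5⟩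
    · ext z
      simp only [Set.mem_inter_iff, Set.mem_empty_iff_false, iff_false]
      rintro ⟨hz, hf⟩
      exact (hZv hz).2 ⟨⟨h5 hz, hx z hz⟩, Or.inr hf⟩
    · intro z hz
      by_contra hf
      exact (hZv hz).2 ⟨⟨h5 hz, hx z hz⟩, Or.inl ⟨trivial, hf⟩⟩

theorem gac_inter {D : V → V → Prop}
    {A Y : V} {L N Z : Set V} (h : GAC D A Y L N Z) : GAC D A Y L N (Z ∩ ancAYL D A Y L) := by
  obtain ⟨h1, h2, h3, h4⟩ := h
  have hL : L ⊆ Z ∩ ancAYL D A Y L := fun l hl => ⟨h3 hl, l, Or.inr hl, .refl⟩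
  refine ⟨?_, ?_, hL, fun z hz => h4 hz.1⟩
  · intro s hs t ht p hp
    by_contra hb
    have how := (OW_iff _ _ p).2 ⟨hp.1, hb⟩
    have hmem : ∀ x ∈ p, x ∈ ancAYL D A Y L := by
      intro x hx
      rw [mem_ancAYL hL Set.inter_subset_right]
      rw [Set.mem_singleton_iff] at hs ht
      subst hs ht
      exact OW_anc how hp.2.1 hp.2.2.1 hx
    apply hb
    rcases h1 s hs t ht p hp with ⟨x, y, z, hi, h5, h6⟩ | ⟨x, y, z, hi, h5, h6⟩
    · refine Or.inl ⟨x, y, z, hi, h5, h6, hmem y ?_⟩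
      obtain ⟨a, b, rfl⟩ := hi
      simp
    · exact Or.inr ⟨x, y, z, hi, h5, fun d hd hdd => h6 d hd hdd.1⟩
  · ext z
    simp only [Set.mem_inter_iff, Set.mem_empty_iff_false, iff_false]
    rintro ⟨⟨hz, -⟩, hf⟩
    have : z ∈ Z ∩ forb D A Y := ⟨hz, hf⟩
    rw [h2] at this; exact this

end aux

/-- Part 4 of Lemma 5 (statement 5): `Z` is a minimum set satisfying the graphical
adjustment criterion iff `Z` is a minimum `A`–`Y` cut in `H¹`. -/
theorem stmt5 {V : Type*} [Fintype V] [DecidableEq V]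
    (D : V → V → Prop) (hacy : Acyclic D)
    (A Y : V) (L N : Set V)
    (hAY : A ≠ Y) (hAancY : Relation.ReflTransGen D A Y)
    (hLnd : L ∩ desc D {A} = ∅) (hLY : Y ∉ L)
    (hN : {A, Y} ∪ L ⊆ N)
    (Z : Set V) :
    MinimumGAC D A Y L N Z ↔ MinimumCut (H1verts D A Y L N) (H1 D A Y L N) A Y Z := by
  have key := gac_iff_cut hacy hAY hAancY hLnd hLY hN
  constructor
  · rintro ⟨h1, h2⟩
    have h3 := h2 _ (gac_inter h1)
    have h4 : Z ∩ ancAYL D A Y L = Z :=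
      Set.eq_of_subset_of_ncard_le Set.inter_subset_left h3 (Set.toFinite _)
    refine ⟨(key Z).1 ⟨h1, Set.inter_eq_left.1 h4⟩, fun Z' hZ' => h2 Z' ((key Z').2 hZ').1⟩
  · rintro ⟨h1, h2⟩
    refine ⟨((key Z).2 h1).1, fun Z' hZ' => ?_⟩
    exact (h2 _ ((key _).1 ⟨gac_inter hZ', Set.inter_subset_right⟩)).trans
      (Set.ncard_le_ncard Set.inter_subset_left (Set.toFinite _))

end CausalGraph
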